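/- arXiv:2602.02381 — 2 statements merged into one kernel-verified Lean document; each statement's English description precedes it below -/
import Mathlib

section
/- Let U ⊆ ℝ^d be a nonempty open connected set, let F be a real inner product space, and let h : ℝ^d → F be differentiable on U with ‖h(z)‖ = 1 for every z ∈ U. Suppose there is a single linear subspace W ⊆ F such that the range of the Fréchet derivative Dh(z) equals W for every z ∈ U. Then W = {0}; consequently Dh(z) = 0 for all z ∈ U. -/
/-!
Differentiating `‖h‖ ^ 2 = const` shows that `h z` is orthogonal to the range of `Dh(z)`. A
vector `w` in all of these ranges is therefore orthogonal to every value of `h`, and differentiating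
`⟪w, h⟫ = 0` shows that `w` is orthogonal to the range of `Dh(z)` as well. Since `w` itself lies in
that range, `⟪w, w⟫ = 0`.
-/

open Filter Topology

section

variable {E F : Type*} [NormedAddCommGroup E] [NormedSpace ℝ E]
  [NormedAddCommGroup F] [InnerProductSpace ℝ F]
  {h : E → F} {h' : E →L[ℝ] F} {z : E}

theorem inner_fderiv_apply_eq_zero_of_norm_eventuallyEq_const {r : ℝ}
    (hderiv : HasFDerivAt h h' z) (hnorm : ∀ᶠ y in 𝓝 z, ‖h y‖ = r) (v : E) :
    inner ℝ (h z) (h' v) = 0 := by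
  have hsq : (fun y ↦ ‖h y‖ ^ 2) =ᶠ[𝓝 z] fun _ ↦ r ^ 2 := EventuallyEq.fun_comp hnorm (· ^ 2)
  have hzero : 2 • (innerSL ℝ (h z)).comp h' = 0 :=
    hderiv.norm_sq.unique (hasFDerivAt_zero_of_eventually_const _ hsq)
  simpa using DFunLike.congr_fun hzero v

theorem inner_fderiv_apply_eq_zero_of_inner_eventuallyEq_const {w : F} {c : ℝ}
    (hderiv : HasFDerivAt h h' z) (hinner : ∀ᶠ y in 𝓝 z, inner ℝ w (h y) = c) (v : E) :
    inner ℝ w (h' v) = 0 := by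
  have hzero : (innerSL ℝ w).comp h' = 0 :=
    ((innerSL ℝ w).hasFDerivAt.comp z hderiv).unique
      (hasFDerivAt_zero_of_eventually_const c hinner)
  exact DFunLike.congr_fun hzero v

end

theorem range_fderiv_constant_of_sphere_valued_eq_bot_general
    {E F : Type*} [NormedAddCommGroup E] [NormedSpace ℝ E]
    [NormedAddCommGroup F] [InnerProductSpace ℝ F]
    {U : Set E} (hUne : U.Nonempty) (hUopen : IsOpen U)
    {h : E → F} {h' : E → E →L[ℝ] F} (hderiv : ∀ z ∈ U, HasFDerivAt h (h' z) z)
    {r : ℝ} (hnorm : ∀ z ∈ U, ‖h z‖ = r)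
    {W : Submodule ℝ F} (hrange : ∀ z ∈ U, W ≤ (h' z : E →ₗ[ℝ] F).range) :
    W = ⊥ := by
  refine (Submodule.eq_bot_iff W).2 fun w hw ↦ ?_
  have horth : ∀ y ∈ U, inner ℝ w (h y) = 0 := fun y hy ↦ by
    obtain ⟨v, rfl⟩ := hrange y hy hw
    rw [real_inner_comm]
    exact inner_fderiv_apply_eq_zero_of_norm_eventuallyEq_const (hderiv y hy)
      (hUopen.eventually_mem hy |>.mono hnorm) v
  obtain ⟨z, hz⟩ := hUne
  obtain ⟨v, hv⟩ := hrange z hz hw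
  have hself : inner ℝ w (h' z v) = 0 :=
    inner_fderiv_apply_eq_zero_of_inner_eventuallyEq_const (hderiv z hz)
      (hUopen.eventually_mem hz |>.mono horth) v
  rwa [show h' z v = w from hv, inner_self_eq_zero] at hself

/-- Let `U ⊆ ℝ^d` be a nonempty open connected set and `h : ℝ^d → F` differentiable on
`U` with `‖h z‖ = 1` on `U` (`F` a real inner product space). If there is a single
subspace `W ⊆ F` such that the range of `Dh(z)` equals `W` for every `z ∈ U`, then
`W = ⊥` and hence `Dh(z) = 0` on `U`. -/
theorem range_fderiv_constant_of_sphere_valued_eq_bot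
    {d : ℕ} {F : Type*} [NormedAddCommGroup F] [InnerProductSpace ℝ F]
    {U : Set (EuclideanSpace ℝ (Fin d))} (hUne : U.Nonempty) (hUopen : IsOpen U)
    (hUconn : IsConnected U)
    (h : EuclideanSpace ℝ (Fin d) → F)
    (hdiff : ∀ z ∈ U, DifferentiableAt ℝ h z)
    (hnorm : ∀ z ∈ U, ‖h z‖ = 1)
    (W : Submodule ℝ F)
    (hrange : ∀ z ∈ U, LinearMap.range (fderiv ℝ h z : EuclideanSpace ℝ (Fin d) →ₗ[ℝ] F) = W) :
    W = ⊥ ∧ ∀ z ∈ U, fderiv ℝ h z = 0 := by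
  have hW : W = ⊥ := range_fderiv_constant_of_sphere_valued_eq_bot_general hUne hUopen
    (fun z hz ↦ (hdiff z hz).hasFDerivAt) hnorm fun z hz ↦ (hrange z hz).ge
  exact ⟨hW, fun z hz ↦ mod_cast LinearMap.range_eq_bot.1 ((hrange z hz).trans hW)⟩
end

section
/- (Deterministic core of Proposition 1.) Let d ≥ 1, let U ⊆ EuclideanSpace ℝ (Fin d) be a nonempty open connected set, and let h : EuclideanSpace ℝ (Fin d) → EuclideanSpace ℝ (Fin (k+1)) be differentiable on U with ‖h(z)‖ = 1 for all z ∈ U and rank Dh(z) = d for all z ∈ U. Let S be a self-adjoint positive definite linear operator on EuclideanSpace ℝ (Fin d). Then there is no continuous linear map C : EuclideanSpace ℝ (Fin (k+1)) → EuclideanSpace ℝ (Fin (k+1)) such that Dh(z) ∘ S ∘ Dh(z)* = C for every z ∈ U, where Dh(z)* denotes the adjoint of the derivative. -/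
open scoped RealInnerProductSpace

/-!
The image of `h` lies in a sphere centred at the origin, so `h z` is normal to the image of `Dh(z)`,
that is, `Dh(z)* h(z) = 0`. If `C = Dh(z) S Dh(z)*` for all `z ∈ U`, then `C` annihilates `h` on all
of `U`; since `C` does not depend on `z`, differentiating gives `C Dh(z) = 0`. But `C` has the same
kernel as `Dh(z)*` because `S` is definite, so `Dh(z)* Dh(z) = 0` and hence `Dh(z) = 0`.
-/

section Kernel

open scoped InnerProduct

theorem ker_comp_comp_adjoint {𝕜 E F : Type*} [RCLike 𝕜]
    [NormedAddCommGroup E] [InnerProductSpace 𝕜 E] [CompleteSpace E]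
    [NormedAddCommGroup F] [InnerProductSpace 𝕜 F] [CompleteSpace F]
    (A : E →L[𝕜] F) {S : E →L[𝕜] E} (hS : ∀ x ≠ 0, inner 𝕜 (S x) x ≠ 0) :
    (A ∘L S ∘L A†).ker = (A†).ker := by
  refine le_antisymm (fun y hy ↦ ?_) fun y hy ↦ by simp_all
  have hASy : A (S ((A†) y)) = 0 := hy
  have hinner : inner 𝕜 (S ((A†) y)) ((A†) y) = 0 := by
    rw [ContinuousLinearMap.adjoint_inner_right, hASy, inner_zero_left]
  by_contra hne
  exact hS _ hne hinner

end Kernel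

section Derivative

open scoped Topology

theorem comp_hasFDerivAt_eq_zero_of_eventually_const {𝕜 E F G : Type*} [NontriviallyNormedField 𝕜]
    [NormedAddCommGroup E] [NormedSpace 𝕜 E] [NormedAddCommGroup F] [NormedSpace 𝕜 F]
    [NormedAddCommGroup G] [NormedSpace 𝕜 G]
    {h : E → F} {h' : E →L[𝕜] F} {z : E} (hh : HasFDerivAt h h' z)
    (C : F →L[𝕜] G) {c : G} (hC : ∀ᶠ w in 𝓝 z, C (h w) = c) :
    C ∘L h' = 0 :=
  (C.hasFDerivAt.comp z hh).unique (hasFDerivAt_zero_of_eventually_const c hC)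

variable {E F : Type*} [NormedAddCommGroup F] [InnerProductSpace ℝ F]

theorem inner_hasFDerivAt_eq_zero_of_norm_eventually_const
    [NormedAddCommGroup E] [NormedSpace ℝ E] {h : E → F} {h' : E →L[ℝ] F} {z : E} {r : ℝ}
    (hh : HasFDerivAt h h' z) (hr : ∀ᶠ w in 𝓝 z, ‖h w‖ = r) (v : E) :
    ⟪h z, h' v⟫ = 0 := by
  have hsq : ∀ᶠ w in 𝓝 z, ‖h w‖ ^ 2 = r ^ 2 := hr.mono fun w hw ↦ by rw [hw]
  have hzero := hh.norm_sq.unique (hasFDerivAt_zero_of_eventually_const (r ^ 2) hsq)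
  simpa using DFunLike.congr_fun hzero v

variable [NormedAddCommGroup E] [InnerProductSpace ℝ E] [CompleteSpace E] [CompleteSpace F]

theorem adjoint_hasFDerivAt_apply_self_eq_zero_of_norm_eventually_const
    {h : E → F} {h' : E →L[ℝ] F} {z : E} {r : ℝ}
    (hh : HasFDerivAt h h' z) (hr : ∀ᶠ w in 𝓝 z, ‖h w‖ = r) :
    h'.adjoint (h z) = 0 := by
  refine ext_inner_right ℝ fun v ↦ ?_
  rw [ContinuousLinearMap.adjoint_inner_left, inner_zero_left,
    inner_hasFDerivAt_eq_zero_of_norm_eventually_const hh hr]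

theorem no_constant_pushforward_covariance_general
    {U : Set E} (hU : IsOpen U) {h : E → F} {h' : E → E →L[ℝ] F}
    (hh : ∀ z ∈ U, HasFDerivAt h (h' z) z) {r : ℝ} (hr : ∀ z ∈ U, ‖h z‖ = r)
    (S : E → E →L[ℝ] E) {z : E} (hz : z ∈ U) (hS : ∀ x ≠ 0, ⟪S z x, x⟫ ≠ 0) (hne : h' z ≠ 0) :
    ¬ ∃ C : F →L[ℝ] F, ∀ w ∈ U, h' w ∘L S w ∘L (h' w).adjoint = C := by
  rintro ⟨C, hC⟩
  have hCh : ∀ w ∈ U, C (h w) = 0 := fun w hw ↦ by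
    have hadj := adjoint_hasFDerivAt_apply_self_eq_zero_of_norm_eventually_const (hh w hw)
      ((hU.eventually_mem hw).mono hr)
    simp [← hC w hw, hadj]
  have hCD : C ∘L h' z = 0 :=
    comp_hasFDerivAt_eq_zero_of_eventually_const (hh z hz) C ((hU.eventually_mem hz).mono hCh)
  have hker : C.ker = (h' z).adjoint.ker := by
    rw [← hC z hz, ker_comp_comp_adjoint _ hS]
  have hadj : (h' z).adjoint ∘L h' z = 0 := by
    ext1 v
    have hv : h' z v ∈ C.ker := DFunLike.congr_fun hCD v
    rwa [hker] at hv
  exact hne (ContinuousLinearMap.adjoint_comp_self_eq_zero_iff.mp hadj)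

end Derivative

/-- Deterministic core of Proposition 1: if `h` maps a nonempty open connected
`U ⊆ ℝ^d` into the unit sphere of `ℝ^{k+1}` with full-rank derivative (`rank Dh(z) = d`)
on `U`, and `S` is a self-adjoint positive definite operator on `ℝ^d`, then there is no
single continuous linear map `C` with `Dh(z) ∘ S ∘ Dh(z)* = C` for all `z ∈ U`. -/
theorem no_constant_pushforward_covariance
    {d k : ℕ} (hd : 1 ≤ d)
    {U : Set (EuclideanSpace ℝ (Fin d))} (hUne : U.Nonempty) (hUopen : IsOpen U)
    (hUconn : IsConnected U)
    (h : EuclideanSpace ℝ (Fin d) → EuclideanSpace ℝ (Fin (k + 1)))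
    (hdiff : ∀ z ∈ U, DifferentiableAt ℝ h z)
    (hnorm : ∀ z ∈ U, ‖h z‖ = 1)
    (hrank : ∀ z ∈ U,
      Module.finrank ℝ
        (LinearMap.range
          (fderiv ℝ h z : EuclideanSpace ℝ (Fin d) →ₗ[ℝ] EuclideanSpace ℝ (Fin (k + 1)))) = d)
    (S : EuclideanSpace ℝ (Fin d) →L[ℝ] EuclideanSpace ℝ (Fin d))
    (hSself : ∀ x y : EuclideanSpace ℝ (Fin d), ⟪S x, y⟫ = ⟪x, S y⟫)
    (hSpos : ∀ x : EuclideanSpace ℝ (Fin d), x ≠ 0 → 0 < ⟪S x, x⟫) :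
    ¬ ∃ C : EuclideanSpace ℝ (Fin (k + 1)) →L[ℝ] EuclideanSpace ℝ (Fin (k + 1)),
      ∀ z ∈ U,
        (fderiv ℝ h z).comp (S.comp (ContinuousLinearMap.adjoint (fderiv ℝ h z))) = C := by
  obtain ⟨z, hz⟩ := hUne
  have hne : fderiv ℝ h z ≠ 0 := fun h0 ↦ by
    have hd0 := hrank z hz
    rw [h0, ContinuousLinearMap.toLinearMap_zero, LinearMap.range_zero, finrank_bot] at hd0
    omega
  exact no_constant_pushforward_covariance_general hUopen (fun w hw ↦ (hdiff w hw).hasFDerivAt)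
    hnorm (fun _ ↦ S) hz (fun x hx ↦ (hSpos x hx).ne') hne
end
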